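/- For μ a partition with a single part (k), the genus-g cut-and-join equation reads (2g-1+k) H_g(k) = (1/2) Σ_{α+β=k, α,β≥1} αβ ( H_{g-1}(α,β) + Σ_{g1+g2=g} H_{g1}(α) H_{g2}(β) ), where H_g(μ) = (|Aut μ|/(2g-2+ℓ(μ)+|μ|)!) h_{g,μ}. -/

import Mathlib

open Equiv

/-- The number of Hurwitz factorizations of the identity in `S_d` into `r` transpositions
and one permutation of cycle type (including fixed points) given by the multiset `μ`,
generating a transitive subgroup.  By monodromy, the Hurwitz number `h_{g,μ}` equals
this count divided by `d!`, where `r = 2g - 2 + ℓ(μ) + |μ|`. -/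
noncomputable def hurwitzCount (d r : ℕ) (μ : Multiset ℕ) : ℕ :=
  Nat.card {p : (Fin r → Perm (Fin d)) × Perm (Fin d) //
    (∀ i, (p.1 i).IsSwap) ∧
    (Equiv.Perm.partition p.2).parts = μ ∧
    (List.ofFn p.1).prod * p.2 = 1 ∧
    (∀ a b : Fin d, ∃ g ∈ Subgroup.closure (Set.range p.1 ∪ {p.2}), g a = b)}

/-- The Hurwitz number `h_{g,μ}`: the weighted (by `1/|Aut f|`) count of topological
types of genus-`g` covers of `ℙ¹` with profile `μ` over `∞` and
`r = 2g - 2 + ℓ(μ) + |μ|` simple ramification points, expressed via monodromy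
factorizations. -/
noncomputable def hurwitzNumber (g : ℕ) (μ : Multiset ℕ) : ℚ :=
  (hurwitzCount μ.sum (2 * g + Multiset.card μ + μ.sum - 2) μ : ℚ) /
    (Nat.factorial μ.sum : ℚ)

/-- The normalized Hurwitz number `H_g(k) = |Aut((k))| h_{g,(k)} / r!` for the
one-part profile `(k)`, where `r = 2g - 2 + 1 + k` and `|Aut((k))| = 1`. -/
noncomputable def Hone (g k : ℕ) : ℚ :=
  hurwitzNumber g {k} / (Nat.factorial (2 * g + 1 + k - 2) : ℚ)

/-- The normalized Hurwitz number `H_g(α,β) = |Aut((α,β))| h_{g,(α,β)} / r!` for the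
two-part profile `(α,β)`, where `r = 2g - 2 + 2 + α + β`. -/
noncomputable def Htwo (g α β : ℕ) : ℚ :=
  (if α = β then 2 else 1) * hurwitzNumber g {α, β} /
    (Nat.factorial (2 * g + 2 + (α + β) - 2) : ℚ)

/-!
A factorization of a `k`-cycle into `m + 1` transpositions is a transposition `s` times a
product `σ` of `m` transpositions. If `s * σ` is a `k`-cycle then `s` joins the two cycles of a
permutation `σ` with exactly two cycles. Ordering these cycles as `(A, Aᶜ)` produces the factor
`2`, and the transpositions joining them are the `|A| * |Aᶜ|` swaps that do not stabilize `A`.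
The `m` transpositions of `σ` either generate a transitive group, which gives the term
`H_{g-1}(α, β)`, or all stabilize `A`; in that case `σ` is a shuffle of a factorization of a
full cycle of `A` with one of `Aᶜ`, which gives the products `H_{g₁}(α) H_{g₂}(β)`. By
Riemann-Hurwitz only lengths that come from a genus contribute to the shuffle: a full cycle on
`k` points is a product of `n` transpositions only when `n + 1 - k` is even and nonnegative.
-/

open Finset.HasAntidiagonal (antidiagonal mem_antidiagonal)

section Words

variable {G H M : Type*} [Monoid G] [Monoid H] [AddCommMonoid M]

/-- The sum of `f (t₁ ⋯ tₙ)` over all words `t` of length `n` in the alphabet `S`. -/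
def wordSum (S : Finset G) (n : ℕ) (f : G → M) : M :=
  ∑ t ∈ Fintype.piFinset fun _ : Fin n => S, f (List.ofFn t).prod

theorem wordSum_zero (S : Finset G) (f : G → M) : wordSum S 0 f = f 1 := by
  simp [wordSum]

theorem wordSum_succ (S : Finset G) (n : ℕ) (f : G → M) :
    wordSum S (n + 1) f = ∑ s ∈ S, wordSum S n fun x => f (s * x) := by
  simp only [wordSum]
  rw [← Finset.sum_product']
  refine Finset.sum_equiv (Fin.consEquiv fun _ => G).symm (fun t => ?_) fun t _ => ?_
  · simp [Fin.forall_fin_succ, Fin.consEquiv, Fin.tail]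
  · simp [Fin.consEquiv, List.ofFn_succ, Fin.tail_def]

theorem wordSum_image [DecidableEq H] (φ : G →* H) (hφ : Function.Injective φ) (S : Finset G)
    (n : ℕ) (f : H → M) : wordSum (S.image φ) n f = wordSum S n fun x => f (φ x) := by
  induction n generalizing f with
  | zero => simp only [wordSum_zero, map_one]
  | succ n ih => simp only [wordSum_succ, Finset.sum_image hφ.injOn, ih, map_mul]

theorem wordSum_sum {ι : Type*} (S : Finset G) (n : ℕ) (I : Finset ι) (f : ι → G → M) :
    (wordSum S n fun x => ∑ i ∈ I, f i x) = ∑ i ∈ I, wordSum S n (f i) :=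
  Finset.sum_comm

/-- The binomial theorem for `(∑ S + ∑ T) ^ n` in the monoid algebra, paired with `f`. -/
theorem wordSum_union_of_commute [DecidableEq G] {S T : Finset G} (hST : Disjoint S T)
    (hcomm : ∀ s ∈ S, ∀ t ∈ T, Commute s t) (n : ℕ) (f : G → M) :
    wordSum (S ∪ T) n f = ∑ ij ∈ antidiagonal n,
      n.choose ij.1 • wordSum S ij.1 fun x => wordSum T ij.2 fun y => f (x * y) := by
  induction n generalizing f with
  | zero => simp [wordSum_zero]
  | succ n ih =>
    rw [Finset.sum_antidiagonal_choose_succ_nsmul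
      (fun i j => wordSum S i fun x => wordSum T j fun y => f (x * y)), wordSum_succ,
      Finset.sum_union hST, add_comm]
    congr 1
    · have hmove (t : G) (ht : t ∈ T) (i j : ℕ) :
          (wordSum S i fun x => wordSum T j fun y => f (t * (x * y))) =
            wordSum S i fun x => wordSum T j fun y => f (x * (t * y)) := by
        refine Finset.sum_congr rfl fun w hw => ?_
        have hcomm_prod : Commute (List.ofFn w).prod t :=
          Commute.list_prod_left _ _ fun s hs => by
            obtain ⟨i, rfl⟩ := List.mem_ofFn.1 hs
            exact hcomm _ (Fintype.mem_piFinset.1 hw i) t ht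
        simp only [← mul_assoc, hcomm_prod.eq]
      rw [Finset.sum_congr rfl fun t _ => ih _, Finset.sum_comm]
      refine Finset.sum_congr rfl fun ij _ => ?_
      rw [← Finset.smul_sum, Finset.sum_congr rfl fun t ht => hmove t ht _ _]
      simp only [wordSum_succ, wordSum_sum]
    · rw [Finset.sum_congr rfl fun s _ => ih _, Finset.sum_comm]
      refine Finset.sum_congr rfl fun ij hij => ?_
      rw [← Finset.smul_sum, Nat.choose_symm_of_eq_add (mem_antidiagonal.1 hij).symm]
      simp only [wordSum_succ, mul_assoc]

open scoped Classical in
/-- The number of words of length `n` in the alphabet `S` whose product satisfies `p`. -/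
noncomputable def wordCount (S : Finset G) (n : ℕ) (p : G → Prop) : ℕ :=
  wordSum S n fun x => if p x then 1 else 0

theorem wordCount_eq_card (S : Finset G) (n : ℕ) (p : G → Prop)
    [DecidablePred fun t : Fin n → G => p (List.ofFn t).prod] :
    wordCount S n p =
      ((Fintype.piFinset fun _ : Fin n => S).filter fun t => p (List.ofFn t).prod).card := by
  rw [wordCount, wordSum, Finset.card_filter]
  congr!

theorem sum_wordCount {ι : Type*} (S : Finset G) (n : ℕ) (I : Finset ι) (p : ι → G → Prop)
    [∀ x, DecidablePred fun i => p i x] :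
    ∑ i ∈ I, wordCount S n (p i) = wordSum S n fun x => (I.filter fun i => p i x).card := by
  simp only [wordCount, ← wordSum_sum, Finset.card_filter]
  congr!

theorem wordCount_and_const (S : Finset G) (n : ℕ) (p : G → Prop) (q : Prop) [Decidable q] :
    (wordCount S n fun x => p x ∧ q) = if q then wordCount S n p else 0 := by
  split_ifs with hq
  · simp only [hq, and_true]
  · simp [hq, wordCount, wordSum]

open scoped Classical in
theorem wordCount_mul_wordCount (S : Finset G) (T : Finset H) (m n : ℕ) (p : G → Prop)
    (q : H → Prop) : wordCount S m p * wordCount T n q =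
      wordSum S m fun x => wordSum T n fun y => if p x ∧ q y then 1 else 0 := by
  simp only [wordCount, wordSum, Finset.sum_mul_sum, ite_zero_mul_ite_zero, mul_one]

end Words

section Orbits

variable {X : Type*} [Fintype X] [DecidableEq X] {σ : Perm X} {A B : Finset X}

open scoped Classical in
/-- The partition of the underlying set into the orbits of `σ`, fixed points included. -/
noncomputable def cyclePartition (σ : Perm X) : Finpartition (Finset.univ : Finset X) :=
  Finpartition.ofSetoid (Perm.SameCycle.setoid σ)

theorem mem_part_cyclePartition {x y : X} :
    y ∈ (cyclePartition σ).part x ↔ σ.SameCycle x y := by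
  classical exact Finpartition.mem_part_ofSetoid_iff_rel

theorem part_cyclePartition_of_apply_eq {x : X} (hx : σ x = x) :
    (cyclePartition σ).part x = {x} := by
  ext y
  rw [mem_part_cyclePartition, Finset.mem_singleton]
  exact ⟨fun h => (h.eq_of_left hx).symm, fun h => h.sameCycle σ |>.symm⟩

theorem part_cyclePartition_of_apply_ne {x : X} (hx : σ x ≠ x) :
    (cyclePartition σ).part x = (σ.cycleOf x).support := by
  ext y
  rw [mem_part_cyclePartition, Perm.mem_support_cycleOf_iff' hx]

theorem parts_cyclePartition (σ : Perm X) :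
    (cyclePartition σ).parts =
      σ.cycleFactorsFinset.image Perm.support ∪ σ.supportᶜ.image singleton := by
  ext c
  simp only [Finset.mem_union, Finset.mem_image, Finset.mem_compl, Perm.notMem_support]
  constructor
  · intro hc
    obtain ⟨x, -, rfl⟩ := (cyclePartition σ).part_surjOn hc
    by_cases hx : σ x = x
    · exact Or.inr ⟨x, hx, (part_cyclePartition_of_apply_eq hx).symm⟩
    · exact Or.inl ⟨σ.cycleOf x,
        Perm.cycleOf_mem_cycleFactorsFinset_iff.2 (Perm.mem_support.2 hx),
        (part_cyclePartition_of_apply_ne hx).symm⟩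
  · rintro (⟨f, hf, rfl⟩ | ⟨x, hx, rfl⟩)
    · obtain ⟨x, hxf⟩ := (Perm.mem_cycleFactorsFinset_iff.1 hf).1.nonempty_support
      have hx : σ x ≠ x :=
        Perm.mem_support.1 (Perm.mem_cycleFactorsFinset_support_le hf hxf)
      rw [Perm.cycle_is_cycleOf hxf hf, ← part_cyclePartition_of_apply_ne hx]
      exact (cyclePartition σ).part_mem.2 (Finset.mem_univ x)
    · rw [← part_cyclePartition_of_apply_eq hx]
      exact (cyclePartition σ).part_mem.2 (Finset.mem_univ x)

theorem injOn_support_cycleFactorsFinset (σ : Perm X) :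
    Set.InjOn Perm.support (σ.cycleFactorsFinset : Set (Perm X)) := by
  intro f hf g hg hfg
  obtain ⟨x, hx⟩ := (Perm.mem_cycleFactorsFinset_iff.1 hf).1.nonempty_support
  rw [Perm.cycle_is_cycleOf hx hf, Perm.cycle_is_cycleOf (hfg ▸ hx) hg]

theorem parts_partition_eq_map_card (σ : Perm X) :
    σ.partition.parts = (cyclePartition σ).parts.val.map Finset.card := by
  have hdisj : Disjoint (σ.cycleFactorsFinset.image Perm.support)
      (σ.supportᶜ.image singleton) := by
    simp only [Finset.disjoint_left, Finset.mem_image]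
    rintro _ ⟨f, hf, rfl⟩ ⟨x, -, hx⟩
    have htwo := (Perm.mem_cycleFactorsFinset_iff.1 hf).1.two_le_card_support
    rw [← hx, Finset.card_singleton] at htwo
    omega
  rw [parts_cyclePartition, ← Finset.disjUnion_eq_union _ _ hdisj, Finset.disjUnion_val,
    Multiset.map_add, Finset.image_val_of_injOn (injOn_support_cycleFactorsFinset σ),
    Finset.image_val_of_injOn (Finset.singleton_injective.injOn), Perm.parts_partition,
    Perm.cycleType_def, Multiset.map_map, Multiset.map_map]
  simp [Finset.card_compl]

theorem sign_eq_neg_one_pow_card_add (σ : Perm X) :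
    Perm.sign σ = (-1) ^ (Fintype.card X + (cyclePartition σ).parts.card) := by
  have hcard := congrArg Multiset.card (parts_partition_eq_map_card σ)
  rw [Perm.parts_partition, Multiset.card_add, Multiset.card_replicate, Multiset.card_map,
    Finset.card_val] at hcard
  have hsupp := σ.support.card_le_univ
  rw [Perm.sign_of_cycleType, Perm.sum_cycleType]
  apply neg_one_pow_congr
  simp only [Nat.even_iff]
  omega

theorem isCycleOn_univ_iff {Y : Type*} {τ : Perm Y} :
    τ.IsCycleOn Set.univ ↔ ∀ x y, τ.SameCycle x y :=
  ⟨fun h x y => h.2 (Set.mem_univ x) (Set.mem_univ y),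
    fun h => ⟨Set.bijOn_univ.2 τ.bijective, fun x _ y _ => h x y⟩⟩

theorem isCycleOn_univ_iff_parts_cyclePartition [Nonempty X] :
    σ.IsCycleOn Set.univ ↔ (cyclePartition σ).parts = {Finset.univ} := by
  have hmem (x : X) := (cyclePartition σ).part_mem.2 (Finset.mem_univ x)
  rw [isCycleOn_univ_iff]
  constructor
  · intro h
    have hpart (x : X) : (cyclePartition σ).part x = Finset.univ :=
      Finset.eq_univ_of_forall fun y => mem_part_cyclePartition.2 (h x y)
    ext c
    rw [Finset.mem_singleton]
    constructor
    · intro hc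
      obtain ⟨x, -, rfl⟩ := (cyclePartition σ).part_surjOn hc
      exact hpart x
    · rintro rfl
      simpa only [hpart] using hmem (Classical.arbitrary X)
  · intro h x y
    have hx := hmem x
    rw [h, Finset.mem_singleton] at hx
    rw [← mem_part_cyclePartition, hx]
    exact Finset.mem_univ y

/-- `A` and its complement are the orbits of `σ`, up to the possibility that one of them is
empty. -/
def IsCyclePair (σ : Perm X) (A : Finset X) : Prop :=
  σ.IsCycleOn A ∧ σ.IsCycleOn (Aᶜ : Finset X)

theorem isCyclePair_iff : IsCyclePair σ A ↔ ∀ x y, σ.SameCycle x y ↔ (x ∈ A ↔ y ∈ A) := by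
  constructor
  · rintro ⟨hA, hAc⟩ x y
    constructor
    · rintro ⟨n, rfl⟩
      exact ⟨fun hx => (hA.1.perm_zpow n).mapsTo hx, fun hx => by
        by_contra hxA
        exact Finset.mem_compl.1 ((hAc.1.perm_zpow n).mapsTo (Finset.mem_compl.2 hxA)) hx⟩
    · intro hxy
      by_cases hx : x ∈ A
      · exact hA.2 hx (hxy.1 hx)
      · exact hAc.2 (Finset.mem_compl.2 hx) (Finset.mem_compl.2 (hx ∘ hxy.2))
  · intro h
    have hσ (x : X) : σ x ∈ A ↔ x ∈ A := ((h x (σ x)).1 ⟨1, by simp⟩).symm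
    refine ⟨⟨σ.bijOn hσ, fun x hx y hy => (h x y).2 ⟨fun _ => hy, fun _ => hx⟩⟩,
      σ.bijOn fun x => ?_, fun x hx y hy => (h x y).2 ?_⟩
    · simp [hσ]
    · exact iff_of_false (Finset.mem_compl.1 hx) (Finset.mem_compl.1 hy)

theorem isCyclePair_compl : IsCyclePair σ Aᶜ ↔ IsCyclePair σ A := by
  rw [IsCyclePair, IsCyclePair, compl_compl, and_comm]

theorem IsCyclePair.iff_eq_or_eq_compl (hA : IsCyclePair σ A) :
    IsCyclePair σ B ↔ B = A ∨ B = Aᶜ := by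
  refine ⟨fun hB => ?_, ?_⟩
  · have hAB (x y : X) : (x ∈ B ↔ y ∈ B) ↔ (x ∈ A ↔ y ∈ A) :=
      (isCyclePair_iff.1 hB x y).symm.trans (isCyclePair_iff.1 hA x y)
    by_cases hBA : ∃ a, ¬ (a ∈ B ↔ a ∈ A)
    · obtain ⟨a, ha⟩ := hBA
      refine Or.inr (Finset.ext fun x => ?_)
      have := hAB a x
      rw [Finset.mem_compl]
      tauto
    · exact Or.inl (Finset.ext fun x => not_not.1 fun hx => hBA ⟨x, hx⟩)
  · rintro (rfl | rfl)
    exacts [hA, isCyclePair_compl.2 hA]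

theorem isCyclePair_iff_parts_cyclePartition (hA : A.Nonempty) (hAc : Aᶜ.Nonempty) :
    IsCyclePair σ A ↔ (cyclePartition σ).parts = {A, Aᶜ} := by
  have hmem (x : X) := (cyclePartition σ).part_mem.2 (Finset.mem_univ x)
  rw [isCyclePair_iff]
  constructor
  · intro h
    have hpart {x : X} (hx : x ∈ A) : (cyclePartition σ).part x = A := by
      ext y
      simp [mem_part_cyclePartition, h, hx]
    have hpart_compl {x : X} (hx : x ∈ Aᶜ) : (cyclePartition σ).part x = Aᶜ := by
      ext y
      simp [mem_part_cyclePartition, h, Finset.mem_compl.1 hx]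
    ext c
    rw [Finset.mem_insert, Finset.mem_singleton]
    constructor
    · intro hc
      obtain ⟨x, -, rfl⟩ := (cyclePartition σ).part_surjOn hc
      by_cases hx : x ∈ A
      exacts [Or.inl (hpart hx), Or.inr (hpart_compl (Finset.mem_compl.2 hx))]
    · rintro (rfl | rfl)
      exacts [hpart hA.choose_spec ▸ hmem _, hpart_compl hAc.choose_spec ▸ hmem _]
  · intro h x y
    have hx := hmem x
    have hx_mem := (cyclePartition σ).mem_part (Finset.mem_univ x)
    rw [← mem_part_cyclePartition]
    rw [h, Finset.mem_insert, Finset.mem_singleton] at hx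
    rcases hx with hx | hx <;> rw [hx] at hx_mem ⊢
    · simp [hx_mem]
    · simp [Finset.mem_compl.1 hx_mem]

end Orbits

section CycleType

variable {X : Type*} [Fintype X] [DecidableEq X] {σ : Perm X} {A : Finset X} {α β : ℕ}

theorem parts_partition_eq_card_iff [Nonempty X] :
    σ.partition.parts = {Fintype.card X} ↔ σ.IsCycleOn Set.univ := by
  rw [isCycleOn_univ_iff_parts_cyclePartition, parts_partition_eq_map_card,
    Multiset.map_eq_singleton, ← Finset.val_inj, Finset.singleton_val]
  constructor
  · rintro ⟨c, hc, hcard⟩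
    rwa [(Finset.card_eq_iff_eq_univ c).1 hcard] at hc
  · exact fun h => ⟨Finset.univ, h, Finset.card_univ⟩

theorem parts_eq_pair_of_card_eq_two {P : Finpartition (Finset.univ : Finset X)}
    (hP : P.parts.card = 2) (hA : A ∈ P.parts) : P.parts = {A, Aᶜ} := by
  obtain ⟨B, hB⟩ : ∃ B, P.parts.erase A = {B} :=
    Finset.card_eq_one.1 (by rw [Finset.card_erase_of_mem hA, hP])
  have hparts : P.parts = {A, B} := by rw [← hB, Finset.insert_erase hA]
  obtain ⟨hBA, hBP⟩ := Finset.mem_erase.1 (hB ▸ Finset.mem_singleton_self B)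
  have hunion : A ⊔ B = ⊤ := by simpa [hparts] using P.sup_parts
  have hcompl : IsCompl A B := ⟨P.disjoint hA hBP hBA.symm, codisjoint_iff.2 hunion⟩
  rw [hparts, hcompl.compl_eq]

theorem IsCyclePair.parts_partition (hσ : IsCyclePair σ A) (hA : A.Nonempty)
    (hAc : Aᶜ.Nonempty) : σ.partition.parts = {A.card, Aᶜ.card} := by
  have hne : A ∉ ({Aᶜ} : Finset (Finset X)) := by
    obtain ⟨a, ha⟩ := hA
    exact fun h => Finset.mem_compl.1 (Finset.mem_singleton.1 h ▸ ha) ha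
  rw [parts_partition_eq_map_card, (isCyclePair_iff_parts_cyclePartition hA hAc).1 hσ,
    Finset.insert_val_of_notMem hne]
  simp

theorem card_isCyclePair_of_card (hα : 0 < α) (hβ : 0 < β) (hX : Fintype.card X = α + β)
    [DecidablePred (IsCyclePair σ)] :
    (Finset.univ.powersetCard α |>.filter (IsCyclePair σ)).card =
      if σ.partition.parts = {α, β} then if α = β then 2 else 1 else 0 := by
  have hne {A : Finset X} (hA : A.card = α) : A.Nonempty ∧ Aᶜ.Nonempty ∧ Aᶜ.card = β := by
    have hAc : Aᶜ.card = β := by rw [Finset.card_compl]; omega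
    exact ⟨Finset.card_pos.1 (hA ▸ hα), Finset.card_pos.1 (hAc ▸ hβ), hAc⟩
  by_cases hparts : σ.partition.parts = {α, β}
  · have hfilter : (Finset.univ.powersetCard α).filter (IsCyclePair σ) =
        (cyclePartition σ).parts.filter fun A => α = A.card := by
      ext A
      simp only [Finset.mem_filter, Finset.mem_powersetCard_univ, eq_comm (a := α)]
      rw [and_comm]
      refine and_congr_left fun hA => ?_
      obtain ⟨hA₁, hA₂, -⟩ := hne hA
      rw [isCyclePair_iff_parts_cyclePartition hA₁ hA₂]
      refine ⟨fun h => h ▸ Finset.mem_insert_self A _, parts_eq_pair_of_card_eq_two ?_⟩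
      simpa [parts_partition_eq_map_card] using congrArg Multiset.card hparts
    rw [if_pos hparts, hfilter, Finset.card_def, Finset.filter_val, ← Multiset.count_map,
      ← parts_partition_eq_map_card, hparts]
    simp only [Multiset.insert_eq_cons, Multiset.count_cons, Multiset.count_singleton]
    split_ifs <;> simp_all
  · rw [if_neg hparts, Finset.card_eq_zero, Finset.filter_eq_empty_iff]
    intro A hA hσ
    obtain ⟨hA₁, hA₂, hA₃⟩ := hne (Finset.mem_powersetCard.1 hA).2
    exact hparts (by rw [hσ.parts_partition hA₁ hA₂, hA₃, (Finset.mem_powersetCard.1 hA).2])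

end CycleType

section Swap

open scoped Pointwise

variable {X : Type*} {σ s : Perm X} {A : Finset X} {a b x : X}

theorem sameCycle_swap_mul [Finite X] [DecidableEq X] (h : σ.SameCycle x a ∨ σ.SameCycle x b) :
    (swap a b * σ).SameCycle x a ∨ (swap a b * σ).SameCycle x b := by
  by_contra! hτ
  have hpow (n : ℕ) : (σ ^ n) x = ((swap a b * σ) ^ n) x := by
    induction n with
    | zero => rfl
    | succ n ih =>
      have hne {c : X} (hc : ¬ (swap a b * σ).SameCycle x c) :
          ((swap a b * σ) ^ (n + 1)) x ≠ c := fun h => hc ⟨(n + 1 : ℕ), h⟩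
      rw [← swap_apply_of_ne_of_ne (hne hτ.1) (hne hτ.2), pow_succ', pow_succ', Perm.mul_apply,
        Perm.mul_apply, ih, Perm.mul_apply, swap_apply_self]
  have hσ {c : X} (hc : ¬ (swap a b * σ).SameCycle x c) : ¬ σ.SameCycle x c := fun h => by
    obtain ⟨n, hn⟩ := h.exists_nat_pow_eq
    exact hc ⟨n, by rw [zpow_natCast, ← hpow, hn]⟩
  exact h.elim (hσ hτ.1) (hσ hτ.2)

theorem swap_mem_stabilizer_iff [DecidableEq X] :
    swap a b ∈ MulAction.stabilizer (Perm X) A ↔ (a ∈ A ↔ b ∈ A) := by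
  simp only [MulAction.mem_stabilizer_finset, Perm.smul_def]
  refine ⟨fun h => by simpa using h b, fun h x => ?_⟩
  rw [swap_apply_def]
  split_ifs with hxa hxb
  · rw [hxa, h]
  · rw [hxb, h]
  · rfl

variable [DecidableEq X]

theorem isCyclePair_filter_sameCycle [Fintype X] [DecidablePred (σ.SameCycle a)]
    (hcover : ∀ x, σ.SameCycle x a ∨ σ.SameCycle x b) :
    IsCyclePair σ (Finset.univ.filter (σ.SameCycle a)) := by
  refine isCyclePair_iff.2 fun x y => ?_
  simp only [Finset.mem_filter, Finset.mem_univ, true_and]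
  refine ⟨fun h => ⟨fun hx => hx.trans h, fun hy => hy.trans h.symm⟩, fun h => ?_⟩
  by_cases hx : σ.SameCycle a x
  · exact hx.symm.trans (h.1 hx)
  · have hxb := (hcover x).resolve_left fun h => hx h.symm
    exact hxb.trans ((hcover y).resolve_left fun hy => hx (h.2 hy.symm)).symm

/-- The hypothesis says that `σ` has at most two orbits, which the sign tells apart. -/
theorem sameCycle_iff_sign_eq [Fintype X]
    (hcover : ∀ x, σ.SameCycle x a ∨ σ.SameCycle x b) :
    σ.SameCycle a b ↔ Perm.sign σ = (-1) ^ (Fintype.card X + 1) := by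
  classical
  by_cases hab : σ.SameCycle a b
  · have : Nonempty X := ⟨a⟩
    have ha (x : X) : σ.SameCycle x a := (hcover x).elim id fun h => h.trans hab.symm
    have huniv := isCycleOn_univ_iff.2 fun x y => (ha x).trans (ha y).symm
    simp [hab, sign_eq_neg_one_pow_card_add, isCycleOn_univ_iff_parts_cyclePartition.1 huniv]
  · have hpair := isCyclePair_filter_sameCycle hcover
    have : Nonempty X := ⟨a⟩
    rw [isCyclePair_iff_parts_cyclePartition ⟨a, by simp [Perm.SameCycle.refl]⟩
      ⟨b, by simp [hab]⟩] at hpair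
    rw [sign_eq_neg_one_pow_card_add, hpair, Finset.card_pair ne_compl_self, pow_succ, pow_add]
    simp [hab]

theorem sameCycle_swap_mul_iff [Finite X] (hab : a ≠ b)
    (hcover : ∀ x, σ.SameCycle x a ∨ σ.SameCycle x b) :
    (swap a b * σ).SameCycle a b ↔ ¬ σ.SameCycle a b := by
  have := Fintype.ofFinite X
  rw [sameCycle_iff_sign_eq hcover, sameCycle_iff_sign_eq fun x => sameCycle_swap_mul (hcover x),
    Perm.sign_mul, Perm.sign_swap hab, neg_one_mul, ← ne_eq, Int.units_ne_iff_eq_neg,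
    neg_eq_iff_eq_neg]

theorem isCycleOn_univ_swap_mul_iff [Fintype X] (hab : a ≠ b) :
    (swap a b * σ).IsCycleOn Set.univ ↔
      ∃ A, IsCyclePair σ A ∧ swap a b ∉ MulAction.stabilizer (Perm X) A := by
  classical
  simp only [swap_mem_stabilizer_iff, isCycleOn_univ_iff]
  constructor
  · intro h
    have hcover (x : X) : σ.SameCycle x a ∨ σ.SameCycle x b := by
      simpa [← mul_assoc] using sameCycle_swap_mul (b := b) (Or.inl (h x a))
    have hσ := (sameCycle_swap_mul_iff hab hcover).1 (h a b)
    exact ⟨_, isCyclePair_filter_sameCycle hcover, by simp [hσ, Perm.SameCycle.refl]⟩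
  · rintro ⟨A, hA, hcross⟩
    have hcover (x : X) : σ.SameCycle x a ∨ σ.SameCycle x b := by
      simp only [isCyclePair_iff.1 hA]
      tauto
    rw [← isCyclePair_iff.1 hA] at hcross
    have hab_cycle := (sameCycle_swap_mul_iff hab hcover).2 hcross
    have ha (x : X) : (swap a b * σ).SameCycle x a :=
      (sameCycle_swap_mul (hcover x)).elim id fun h => h.trans hab_cycle.symm
    exact fun x y => (ha x).trans (ha y).symm

open scoped Classical in
theorem card_isCyclePair_notMem_stabilizer [Fintype X] (hs : s.IsSwap) :
    (Finset.univ.filter fun A => IsCyclePair σ A ∧ s ∉ MulAction.stabilizer (Perm X) A).card =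
      if (s * σ).IsCycleOn Set.univ then 2 else 0 := by
  obtain ⟨a, b, hab, rfl⟩ := hs
  simp only [isCycleOn_univ_swap_mul_iff hab]
  split_ifs with h
  · obtain ⟨A, hA, hcross⟩ := h
    have hpair : (Finset.univ.filter fun B =>
        IsCyclePair σ B ∧ swap a b ∉ MulAction.stabilizer (Perm X) B) = {A, Aᶜ} := by
      ext B
      simp only [Finset.mem_filter, Finset.mem_univ, true_and, Finset.mem_insert,
        Finset.mem_singleton, ← hA.iff_eq_or_eq_compl, and_iff_left_iff_imp]
      intro hB
      rw [swap_mem_stabilizer_iff, ← isCyclePair_iff.1 hA] at hcross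
      rwa [swap_mem_stabilizer_iff, ← isCyclePair_iff.1 hB]
    have : Nonempty X := ⟨a⟩
    rw [hpair, Finset.card_pair ne_compl_self]
  · rw [Finset.card_eq_zero, Finset.filter_eq_empty_iff]
    exact fun A _ hA => h ⟨A, hA⟩

end Swap

section CutAndJoin

open scoped Pointwise

variable {X : Type*} [Fintype X] [DecidableEq X]

variable (X) in
open scoped Classical in
/-- The transpositions of `X`, as the alphabet of the words whose products are counted. -/
noncomputable def swaps : Finset (Perm X) :=
  Finset.univ.filter Perm.IsSwap

theorem mem_swaps {s : Perm X} : s ∈ swaps X ↔ s.IsSwap := by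
  simp [swaps]

theorem card_swaps_notMem_stabilizer (A : Finset X)
    [DecidablePred (· ∉ MulAction.stabilizer (Perm X) A)] :
    ((swaps X).filter (· ∉ MulAction.stabilizer (Perm X) A)).card = A.card * Aᶜ.card := by
  have himage : (swaps X).filter (· ∉ MulAction.stabilizer (Perm X) A) =
      (A ×ˢ Aᶜ).image fun p => swap p.1 p.2 := by
    ext s
    simp only [Finset.mem_filter, mem_swaps, Finset.mem_image, Finset.mem_product,
      Finset.mem_compl, Prod.exists]
    constructor
    · rintro ⟨⟨a, b, -, rfl⟩, hs⟩
      rw [swap_mem_stabilizer_iff] at hs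
      by_cases ha : a ∈ A
      · exact ⟨a, b, ⟨ha, by tauto⟩, rfl⟩
      · exact ⟨b, a, ⟨by tauto, ha⟩, swap_comm b a⟩
    · rintro ⟨a, b, ⟨ha, hb⟩, rfl⟩
      exact ⟨⟨a, b, ne_of_mem_of_not_mem ha hb, rfl⟩, by rw [swap_mem_stabilizer_iff]; tauto⟩
  rw [himage, Finset.card_image_of_injOn, Finset.card_product]
  rintro ⟨a, b⟩ hab ⟨c, d⟩ hcd (heq : swap a b = swap c d)
  simp only [Finset.coe_product, Set.mem_prod, Finset.mem_coe, Finset.mem_compl] at hab hcd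
  have ha : swap c d a = b := by rw [← heq, swap_apply_left]
  rw [swap_apply_def] at ha
  split_ifs at ha with hac had
  · rw [hac, ha]
  · exact absurd (had ▸ hab.1) hcd.2
  · exact absurd (ha ▸ hab.1) hab.2

theorem two_mul_wordCount_isCycleOn_univ (m : ℕ) :
    2 * wordCount (swaps X) (m + 1) (fun σ => σ.IsCycleOn Set.univ) =
      ∑ A : Finset X, A.card * Aᶜ.card * wordCount (swaps X) m fun σ => IsCyclePair σ A := by
  classical
  calc 2 * wordCount (swaps X) (m + 1) (fun σ => σ.IsCycleOn Set.univ)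
      = ∑ s ∈ swaps X, wordSum (swaps X) m fun σ =>
          if (s * σ).IsCycleOn Set.univ then 2 else 0 := by
        simp only [wordCount, wordSum_succ]
        simp only [wordSum, Finset.mul_sum, mul_ite, mul_one, mul_zero]
    _ = ∑ s ∈ swaps X, ∑ A : Finset X, wordCount (swaps X) m fun σ =>
          IsCyclePair σ A ∧ s ∉ MulAction.stabilizer (Perm X) A := by
        refine Finset.sum_congr rfl fun s hs => ?_
        rw [sum_wordCount]
        simp only [card_isCyclePair_notMem_stabilizer (mem_swaps.1 hs)]
    _ = ∑ A : Finset X, A.card * Aᶜ.card * wordCount (swaps X) m fun σ => IsCyclePair σ A := by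
        rw [Finset.sum_comm]
        refine Finset.sum_congr rfl fun A _ => ?_
        simp only [wordCount_and_const, ← Finset.sum_filter, Finset.sum_const, smul_eq_mul,
          card_swaps_notMem_stabilizer]

end CutAndJoin

section Blocks

open scoped Pointwise

variable {X Y Z : Type*} {A : Finset X}

theorem sameCycle_iff_of_semiconj {π : Perm X} {σ : Perm Y} {ι : Y → X}
    (hι : Function.Injective ι) (h : Function.Semiconj ι σ π) (x y : Y) :
    π.SameCycle (ι x) (ι y) ↔ σ.SameCycle x y := by
  have hpow (n : ℕ) (z : Y) : ι ((σ ^ n) z) = (π ^ n) (ι z) := by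
    simpa only [Perm.iterate_eq_pow] using h.iterate_right n z
  have hzpow (n : ℤ) : ι ((σ ^ n) x) = (π ^ n) (ι x) := by
    cases n with
    | ofNat n => exact hpow n x
    | negSucc n =>
      rw [zpow_negSucc, zpow_negSucc, Perm.eq_inv_iff_eq, ← hpow, ← Perm.mul_apply,
        mul_inv_cancel, Perm.one_apply]
  exact exists_congr fun n => by rw [← hzpow, hι.eq_iff]

theorem isCycleOn_iff_of_semiconj {π : Perm X} {σ : Perm Y} (e : Y ≃ {x // x ∈ A})
    (h : Function.Semiconj (fun y => (e y : X)) σ π) :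
    π.IsCycleOn A ↔ σ.IsCycleOn Set.univ := by
  have hι : Function.Injective fun y => (e y : X) := Subtype.val_injective.comp e.injective
  have hrange : (A : Set X) = (fun y => (e y : X)) '' Set.univ := by
    ext x
    simpa using ⟨fun hx => ⟨e.symm ⟨x, hx⟩, by simp⟩, by rintro ⟨y, rfl⟩; exact (e y).2⟩
  have hbij : Set.BijOn π A A := by
    rw [hrange]
    exact Set.bijOn_image_image h (Set.bijOn_univ.2 σ.bijective) π.injective.injOn
  rw [isCycleOn_univ_iff, Perm.IsCycleOn, and_iff_right hbij, hrange]
  simp [sameCycle_iff_of_semiconj hι h]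

theorem isCyclePair_extendDomain_mul_iff [Fintype X] [DecidableEq X] {σ : Perm Y} {τ : Perm Z}
    (e : Y ≃ {x // x ∈ A}) (f : Z ≃ {x // x ∈ Aᶜ}) :
    IsCyclePair (σ.extendDomain e * τ.extendDomain f) A ↔
      σ.IsCycleOn Set.univ ∧ τ.IsCycleOn Set.univ := by
  refine and_congr (isCycleOn_iff_of_semiconj e fun y => ?_)
    (isCycleOn_iff_of_semiconj f fun z => ?_)
  · have hy : (e y : X) ∉ Aᶜ := by simp
    simp only [Perm.mul_apply, Perm.extendDomain_apply_not_subtype _ _ hy,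
      Perm.extendDomain_apply_image]
  · simp only [Perm.mul_apply, Perm.extendDomain_apply_image]
    rw [Perm.extendDomain_apply_not_subtype]
    exact Finset.mem_compl.1 (f (τ z)).2

variable [DecidableEq X] [DecidableEq Y] [DecidableEq Z]

theorem extendDomain_swap (e : Y ≃ {x // x ∈ A}) (a b : Y) :
    (swap a b).extendDomain e = swap (e a : X) (e b) := by
  ext x
  by_cases hx : x ∈ A
  · obtain ⟨y, hy⟩ := e.surjective ⟨x, hx⟩
    obtain rfl : (e y : X) = x := congrArg Subtype.val hy
    simp only [Perm.extendDomain_apply_image, swap_apply_def, Subtype.val_inj, e.injective.eq_iff]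
    split_ifs <;> rfl
  · rw [Perm.extendDomain_apply_not_subtype _ _ hx, swap_apply_of_ne_of_ne]
    · exact fun h => hx (h ▸ (e a).2)
    · exact fun h => hx (h ▸ (e b).2)

variable [Fintype X] [Fintype Y] [Fintype Z]

theorem image_swaps_extendDomainHom (e : Y ≃ {x // x ∈ A}) :
    (swaps Y).image (Perm.extendDomainHom e) = (swaps X).filter (Perm.support · ⊆ A) := by
  ext s
  simp only [Finset.mem_image, Finset.mem_filter, mem_swaps, Perm.extendDomainHom_apply]
  constructor
  · rintro ⟨_, ⟨a, b, hab, rfl⟩, rfl⟩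
    have hab' : (e a : X) ≠ e b := fun h => hab (e.injective (Subtype.ext h))
    rw [extendDomain_swap, Perm.support_swap hab', Finset.insert_subset_iff]
    exact ⟨⟨_, _, hab', rfl⟩, (e a).2, Finset.singleton_subset_iff.2 (e b).2⟩
  · rintro ⟨⟨a, b, hab, rfl⟩, hs⟩
    rw [Perm.support_swap hab, Finset.insert_subset_iff, Finset.singleton_subset_iff] at hs
    refine ⟨swap (e.symm ⟨a, hs.1⟩) (e.symm ⟨b, hs.2⟩), ⟨_, _, ?_, rfl⟩, ?_⟩
    · simpa using hab
    · simp [extendDomain_swap]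

theorem filter_swaps_mem_stabilizer [DecidablePred (· ∈ MulAction.stabilizer (Perm X) A)] :
    (swaps X).filter (· ∈ MulAction.stabilizer (Perm X) A) =
      (swaps X).filter (Perm.support · ⊆ A) ∪ (swaps X).filter (Perm.support · ⊆ Aᶜ) := by
  rw [← Finset.filter_or]
  refine Finset.filter_congr fun s hs => ?_
  obtain ⟨a, b, hab, rfl⟩ := mem_swaps.1 hs
  rw [swap_mem_stabilizer_iff, Perm.support_swap hab]
  simp only [Finset.insert_subset_iff, Finset.singleton_subset_iff, Finset.mem_compl]
  tauto

theorem wordCount_stabilizer_isCyclePair [DecidablePred (· ∈ MulAction.stabilizer (Perm X) A)]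
    (e : Y ≃ {x // x ∈ A}) (f : Z ≃ {x // x ∈ Aᶜ}) (m : ℕ) :
    wordCount ((swaps X).filter (· ∈ MulAction.stabilizer (Perm X) A)) m
        (fun π => IsCyclePair π A) =
      ∑ ij ∈ antidiagonal m, m.choose ij.1 *
        (wordCount (swaps Y) ij.1 (fun σ => σ.IsCycleOn Set.univ) *
          wordCount (swaps Z) ij.2 fun τ => τ.IsCycleOn Set.univ) := by
  classical
  have hdisj {s t : Perm X} (hs : s.support ⊆ A) (ht : t.support ⊆ Aᶜ) : s.Disjoint t :=
    Perm.disjoint_iff_disjoint_support.2 (disjoint_compl_right.mono hs ht)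
  have hdisjoint : Disjoint ((swaps X).filter (Perm.support · ⊆ A))
      ((swaps X).filter (Perm.support · ⊆ Aᶜ)) := by
    refine Finset.disjoint_left.2 fun s hs ht => ?_
    simp only [Finset.mem_filter] at hs ht
    exact (Perm.IsSwap.isCycle (mem_swaps.1 hs.1)).ne_one
      (Perm.disjoint_refl_iff.1 (hdisj hs.2 ht.2))
  rw [filter_swaps_mem_stabilizer, wordCount, wordSum_union_of_commute hdisjoint]
  · refine Finset.sum_congr rfl fun ij _ => ?_
    simp only [← image_swaps_extendDomainHom e, ← image_swaps_extendDomainHom f,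
      wordSum_image _ (Perm.extendDomainHom_injective _), Perm.extendDomainHom_apply,
      isCyclePair_extendDomain_mul_iff, smul_eq_mul, wordCount_mul_wordCount]
  · exact fun s hs t ht =>
      (hdisj (Finset.mem_filter.1 hs).2 (Finset.mem_filter.1 ht).2).commute

end Blocks

section Transitivity

open scoped Pointwise

variable {X : Type*}

theorem isPretransitive_of_isCycleOn_univ {K : Subgroup (Perm X)} {σ : Perm X} (hσ : σ ∈ K)
    (hcycle : σ.IsCycleOn Set.univ) : MulAction.IsPretransitive K X where
  exists_smul_eq x y := by
    obtain ⟨n, hn⟩ := hcycle.2 (Set.mem_univ x) (Set.mem_univ y)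
    exact ⟨⟨σ ^ n, zpow_mem hσ n⟩, hn⟩

variable [Fintype X] [DecidableEq X] {σ : Perm X} {A : Finset X}

theorem isPretransitive_iff_not_le_stabilizer {K : Subgroup (Perm X)} (hσ : σ ∈ K)
    (hpair : IsCyclePair σ A) (hA : A.Nonempty) (hAc : Aᶜ.Nonempty) :
    MulAction.IsPretransitive K X ↔ ¬ K ≤ MulAction.stabilizer (Perm X) A := by
  constructor
  · intro htrans hle
    obtain ⟨⟨a, ha⟩, b, hb⟩ := hA, hAc
    obtain ⟨⟨g, hg⟩, rfl⟩ := htrans.exists_smul_eq a b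
    exact Finset.mem_compl.1 hb (MulAction.mem_stabilizer_finset'.1 (hle hg) ha)
  · intro hle
    obtain ⟨g, hg, hgA⟩ := SetLike.not_le_iff_exists.1 hle
    simp only [MulAction.mem_stabilizer_finset', not_forall] at hgA
    obtain ⟨c, hc, hgc⟩ := hgA
    have hcycle {x y : X} (h : x ∈ A ↔ y ∈ A) : y ∈ MulAction.orbit K x := by
      obtain ⟨n, hn⟩ := (isCyclePair_iff.1 hpair x y).2 h
      exact ⟨⟨σ ^ n, zpow_mem hσ n⟩, hn⟩
    refine MulAction.IsPretransitive.of_orbit (x₀ := c) fun x => ?_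
    by_cases hx : x ∈ A
    · exact hcycle (by tauto)
    · have hgx : x ∈ MulAction.orbit K ((⟨g, hg⟩ : K) • c) := hcycle (by tauto)
      rwa [MulAction.orbit_eq_iff.2 (MulAction.mem_orbit c (⟨g, hg⟩ : K))] at hgx

variable (X) in
open scoped Classical in
/-- The `n`-tuples of transpositions of `X` that generate a transitive group. -/
noncomputable def transitiveSwapTuples (n : ℕ) : Finset (Fin n → Perm X) :=
  (Fintype.piFinset fun _ => swaps X).filter fun t =>
    MulAction.IsPretransitive (Subgroup.closure (Set.range t)) X

theorem prod_ofFn_mem_closure_range {G : Type*} [Group G] {n : ℕ} (t : Fin n → G) :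
    (List.ofFn t).prod ∈ Subgroup.closure (Set.range t) :=
  list_prod_mem fun _ hs => Subgroup.subset_closure (List.mem_ofFn.1 hs)

theorem wordCount_isCycleOn_univ_eq_card (n : ℕ)
    [DecidablePred fun σ : Perm X => σ.IsCycleOn Set.univ] :
    wordCount (swaps X) n (fun σ => σ.IsCycleOn Set.univ) =
      ((transitiveSwapTuples X n).filter fun t => (List.ofFn t).prod.IsCycleOn Set.univ).card := by
  classical
  rw [wordCount_eq_card, transitiveSwapTuples, Finset.filter_filter]
  congr 1
  refine Finset.filter_congr fun t _ => (and_iff_right_of_imp ?_).symm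
  exact isPretransitive_of_isCycleOn_univ (prod_ofFn_mem_closure_range t)

theorem wordCount_isCyclePair (n : ℕ) (hA : A.Nonempty) (hAc : Aᶜ.Nonempty)
    [DecidablePred (IsCyclePair · A)] [DecidablePred (· ∈ MulAction.stabilizer (Perm X) A)] :
    wordCount (swaps X) n (fun σ => IsCyclePair σ A) =
      ((transitiveSwapTuples X n).filter fun t => IsCyclePair (List.ofFn t).prod A).card +
        wordCount ((swaps X).filter (· ∈ MulAction.stabilizer (Perm X) A)) n
          fun σ => IsCyclePair σ A := by
  classical
  rw [wordCount_eq_card, wordCount_eq_card, transitiveSwapTuples, Finset.filter_filter,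
    ← Finset.card_filter_add_card_filter_not fun t : Fin n → Perm X =>
      MulAction.IsPretransitive (Subgroup.closure (Set.range t)) X,
    Finset.filter_filter, Finset.filter_filter]
  congr 2
  · simp only [and_comm]
  · ext t
    have hiff (hpair : IsCyclePair (List.ofFn t).prod A) :
        ¬ MulAction.IsPretransitive (Subgroup.closure (Set.range t)) X ↔
          ∀ i, t i ∈ MulAction.stabilizer (Perm X) A := by
      rw [isPretransitive_iff_not_le_stabilizer (prod_ofFn_mem_closure_range t) hpair hA hAc,
        not_not, Subgroup.closure_le, Set.range_subset_iff]
      rfl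
    simp only [Finset.mem_filter, Fintype.mem_piFinset, forall_and]
    tauto

end Transitivity

section RiemannHurwitz

variable {X : Type*} [Fintype X] [DecidableEq X]

theorem exists_invariant_of_forall_isSwap (l : List (Perm X)) (hl : ∀ s ∈ l, s.IsSwap) :
    ∃ f : X → X, f ∘ l.prod = f ∧
      Fintype.card X ≤ (Finset.univ.image f).card + l.length := by
  induction l with
  | nil => exact ⟨id, rfl, by simp⟩
  | cons s l ih =>
    obtain ⟨f, hf, hcard⟩ := ih fun s hs => hl s (List.mem_cons_of_mem _ hs)
    obtain ⟨a, b, -, rfl⟩ := hl s List.mem_cons_self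
    set merge : X → X := fun y => if y = f b then f a else y with hmerge
    have hswap (z : X) : merge (f (swap a b z)) = merge (f z) := by
      rw [swap_apply_def]
      split_ifs with ha hb
      · simp [hmerge, ha]
      · simp [hmerge, hb]
      · rfl
    refine ⟨merge ∘ f, funext fun y => ?_, ?_⟩
    · simp only [Function.comp_apply, List.prod_cons, Perm.mul_apply, hswap]
      rw [← Function.comp_apply (f := f), hf]
    · have hsub : Finset.univ.image f ⊆ insert (f b) (Finset.univ.image (merge ∘ f)) := by
        refine Finset.image_subset_iff.2 fun x _ => ?_
        by_cases hx : f x = f b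
        · exact Finset.mem_insert.2 (.inl hx)
        · exact Finset.mem_insert_of_mem (Finset.mem_image.2 ⟨x, by simp, by simp [hmerge, hx]⟩)
      have := (Finset.card_le_card hsub).trans (Finset.card_insert_le _ _)
      rw [List.length_cons]
      omega

theorem card_le_length_add_one [Nonempty X] {l : List (Perm X)} (hl : ∀ s ∈ l, s.IsSwap)
    (hcycle : l.prod.IsCycleOn Set.univ) : Fintype.card X ≤ l.length + 1 := by
  obtain ⟨f, hf, hcard⟩ := exists_invariant_of_forall_isSwap l hl
  have hconst (x y : X) : f x = f y := by
    obtain ⟨n, rfl⟩ := (isCycleOn_univ_iff.1 hcycle x y).exists_nat_pow_eq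
    exact (congrFun (Function.iterate_invariant hf n) x).symm
  have : (Finset.univ.image f).card ≤ 1 := by
    simpa [Finset.card_le_one] using hconst
  omega

theorem exists_length_add_one_eq [Nonempty X] {l : List (Perm X)} (hl : ∀ s ∈ l, s.IsSwap)
    (hcycle : l.prod.IsCycleOn Set.univ) : ∃ g, l.length + 1 = 2 * g + Fintype.card X := by
  have hsign : (-1 : ℤˣ) ^ l.length = (-1) ^ (Fintype.card X + 1) := by
    rw [← Perm.sign_prod_list_swap hl, sign_eq_neg_one_pow_card_add,
      isCycleOn_univ_iff_parts_cyclePartition.1 hcycle, Finset.card_singleton]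
  have heven : Even (l.length + (Fintype.card X + 1)) := by
    rw [← neg_one_pow_eq_one_iff_even (R := ℤˣ) (by decide), pow_add, hsign, ← mul_pow]
    simp
  obtain ⟨c, hc⟩ := heven
  have := card_le_length_add_one hl hcycle
  exact ⟨c - Fintype.card X, by omega⟩

theorem exists_add_one_eq_of_wordCount_ne_zero [Nonempty X] {n : ℕ}
    (h : wordCount (swaps X) n (fun σ => σ.IsCycleOn Set.univ) ≠ 0) :
    ∃ g, n + 1 = 2 * g + Fintype.card X := by
  classical
  rw [wordCount_eq_card, Finset.card_ne_zero] at h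
  obtain ⟨t, ht⟩ := h
  rw [Finset.mem_filter, Fintype.mem_piFinset] at ht
  have hswap : ∀ s ∈ List.ofFn t, s.IsSwap :=
    List.forall_mem_ofFn_iff.2 fun i => mem_swaps.1 (ht.1 i)
  simpa using exists_length_add_one_eq hswap ht.2

end RiemannHurwitz

section HurwitzCount

theorem parts_partition_inv {X : Type*} [Fintype X] [DecidableEq X] (σ : Perm X) :
    σ⁻¹.partition.parts = σ.partition.parts := by
  simp only [Perm.parts_partition, Perm.cycleType_inv, Perm.support_inv]

theorem isPretransitive_closure_iff {X : Type*} {n : ℕ} (t : Fin n → Perm X) :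
    MulAction.IsPretransitive (Subgroup.closure (Set.range t)) X ↔
      ∀ a b, ∃ g ∈ Subgroup.closure (Set.range t ∪ {(List.ofFn t).prod⁻¹}), g a = b := by
  have hclosure : Subgroup.closure (Set.range t ∪ {(List.ofFn t).prod⁻¹}) =
      Subgroup.closure (Set.range t) := by
    rw [Subgroup.closure_union, sup_eq_left, Subgroup.closure_le, Set.singleton_subset_iff]
    exact inv_mem (prod_ofFn_mem_closure_range t)
  simp only [hclosure, MulAction.isPretransitive_iff, Subgroup.smul_def, Subtype.exists,
    Perm.smul_def, exists_prop]

theorem hurwitzCount_eq_card (d r : ℕ) (μ : Multiset ℕ) :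
    hurwitzCount d r μ = ((transitiveSwapTuples (Fin d) r).filter fun t =>
      (List.ofFn t).prod.partition.parts = μ).card := by
  classical
  have hinj : Function.Injective fun t : Fin r → Perm (Fin d) => (t, (List.ofFn t).prod⁻¹) :=
    fun t u h => congrArg Prod.fst h
  rw [hurwitzCount, ← Finset.card_image_of_injective _ hinj, Nat.subtype_card]
  rintro ⟨t, σ⟩
  simp only [Finset.mem_image, Finset.mem_filter, transitiveSwapTuples, Fintype.mem_piFinset,
    mem_swaps, isPretransitive_closure_iff, Prod.mk.injEq]
  constructor
  · rintro ⟨t, ⟨⟨ht, htrans⟩, hμ⟩, rfl, rfl⟩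
    exact ⟨ht, by rw [parts_partition_inv, hμ], mul_inv_cancel _, htrans⟩
  · rintro ⟨ht, hμ, hprod, htrans⟩
    obtain rfl := eq_inv_of_mul_eq_one_right hprod
    exact ⟨t, ⟨⟨ht, htrans⟩, by rw [← hμ, parts_partition_inv]⟩, rfl, rfl⟩

theorem hurwitzCount_singleton {k : ℕ} (hk : 0 < k) (n : ℕ) :
    hurwitzCount k n {k} = wordCount (swaps (Fin k)) n fun σ => σ.IsCycleOn Set.univ := by
  classical
  have : NeZero k := ⟨hk.ne'⟩
  rw [hurwitzCount_eq_card, wordCount_isCycleOn_univ_eq_card]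
  simp only [← parts_partition_eq_card_iff, Fintype.card_fin]

theorem sum_card_isCyclePair {α β : ℕ} (hα : 0 < α) (hβ : 0 < β) (n : ℕ)
    [∀ A : Finset (Fin (α + β)), DecidablePred (IsCyclePair · A)] :
    ∑ A ∈ Finset.univ.powersetCard α, ((transitiveSwapTuples (Fin (α + β)) n).filter fun t =>
        IsCyclePair (List.ofFn t).prod A).card =
      (if α = β then 2 else 1) * hurwitzCount (α + β) n {α, β} := by
  classical
  simp only [Finset.card_filter]
  rw [Finset.sum_comm, hurwitzCount_eq_card, Finset.card_filter, Finset.mul_sum]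
  refine Finset.sum_congr rfl fun t _ => ?_
  rw [← Finset.card_filter, mul_ite, mul_one, mul_zero]
  exact card_isCyclePair_of_card hα hβ (by simp)

theorem sum_wordCount_isCyclePair {α β : ℕ} (hα : 0 < α) (hβ : 0 < β) (n : ℕ) :
    (∑ A ∈ Finset.univ.powersetCard α, wordCount (swaps (Fin (α + β))) n fun σ => IsCyclePair σ A) =
      (if α = β then 2 else 1) * hurwitzCount (α + β) n {α, β} +
        (α + β).choose α * ∑ ij ∈ antidiagonal n,
          n.choose ij.1 * (hurwitzCount α ij.1 {α} * hurwitzCount β ij.2 {β}) := by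
  classical
  have hsplit (A : Finset (Fin (α + β))) (hA : A.card = α) :
      (wordCount (swaps (Fin (α + β))) n fun σ => IsCyclePair σ A) =
        ((transitiveSwapTuples (Fin (α + β)) n).filter fun t =>
          IsCyclePair (List.ofFn t).prod A).card +
        ∑ ij ∈ antidiagonal n,
          n.choose ij.1 * (hurwitzCount α ij.1 {α} * hurwitzCount β ij.2 {β}) := by
    have hAc : Aᶜ.card = β := by simp [Finset.card_compl, hA]
    rw [wordCount_isCyclePair n (Finset.card_pos.1 (hα.trans_eq hA.symm))
      (Finset.card_pos.1 (hβ.trans_eq hAc.symm)),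
      wordCount_stabilizer_isCyclePair (A.equivFinOfCardEq hA).symm (Aᶜ.equivFinOfCardEq hAc).symm]
    simp only [hurwitzCount_singleton hα, hurwitzCount_singleton hβ]
  rw [Finset.sum_congr rfl fun A hA => hsplit A (Finset.mem_powersetCard.1 hA).2,
    Finset.sum_add_distrib]
  congr 1
  · convert sum_card_isCyclePair hα hβ n
  · simp

theorem two_mul_hurwitzCount_singleton {k : ℕ} (hk : 0 < k) (m : ℕ) :
    2 * hurwitzCount k (m + 1) {k} = ∑ α ∈ Finset.Ico 1 k, α * (k - α) *
      ((if α = k - α then 2 else 1) * hurwitzCount k m {α, k - α} +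
        k.choose α * ∑ ij ∈ antidiagonal m,
          m.choose ij.1 * (hurwitzCount α ij.1 {α} * hurwitzCount (k - α) ij.2 {k - α})) := by
  rw [hurwitzCount_singleton hk, two_mul_wordCount_isCycleOn_univ, ← Finset.powerset_univ,
    Finset.sum_powerset, Finset.card_univ, Fintype.card_fin]
  have hcard (α : ℕ) : (∑ A ∈ (Finset.univ : Finset (Fin k)).powersetCard α,
      A.card * Aᶜ.card * wordCount (swaps (Fin k)) m fun σ => IsCyclePair σ A) =
      α * (k - α) * ∑ A ∈ Finset.univ.powersetCard α,
        wordCount (swaps (Fin k)) m fun σ => IsCyclePair σ A := by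
    rw [Finset.mul_sum]
    refine Finset.sum_congr rfl fun A hA => ?_
    rw [Finset.card_compl, (Finset.mem_powersetCard.1 hA).2, Fintype.card_fin]
  refine (Finset.sum_subset_zero_on_sdiff (fun α hα => ?_) (fun α hα => ?_) fun α hα => ?_).symm
  · simp only [Finset.mem_Ico, Finset.mem_range] at hα ⊢
    omega
  · simp only [Finset.mem_sdiff, Finset.mem_range, Finset.mem_Ico] at hα
    rw [hcard, mul_eq_zero.2 (.inl _)]
    rcases (by omega : α = 0 ∨ α = k) with rfl | rfl <;> simp
  · obtain ⟨hα₁, hα₂⟩ := Finset.mem_Ico.1 hα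
    obtain ⟨β, rfl⟩ := Nat.exists_eq_add_of_le hα₂.le
    have hβ : 0 < β := by omega
    rw [hcard, Nat.add_sub_cancel_left, sum_wordCount_isCyclePair hα₁ hβ]

end HurwitzCount

section Normalization

open scoped Nat

/-- The count `hurwitzCount d r μ` divided by `d! r!`, which for a one-part profile is the
normalized Hurwitz number; here the number `r` of transpositions is free, while in `Hone` and
`Htwo` the genus determines it. -/
noncomputable def normalizedHurwitzCount (d r : ℕ) (μ : Multiset ℕ) : ℚ :=
  hurwitzCount d r μ / (d ! * r !)

theorem Hone_eq_normalizedHurwitzCount (g k : ℕ) :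
    Hone g k = normalizedHurwitzCount k (2 * g + k - 1) {k} := by
  have hlength : 2 * g + 1 + k - 2 = 2 * g + k - 1 := by omega
  simp only [Hone, hurwitzNumber, normalizedHurwitzCount, Multiset.sum_singleton,
    Multiset.card_singleton, hlength, div_div]

theorem Htwo_eq_normalizedHurwitzCount (g α β : ℕ) :
    Htwo g α β = (if α = β then 2 else 1) *
      normalizedHurwitzCount (α + β) (2 * g + (α + β)) {α, β} := by
  have hlength : 2 * g + 2 + (α + β) - 2 = 2 * g + (α + β) := by omega
  simp only [Htwo, hurwitzNumber, normalizedHurwitzCount, Multiset.sum_pair, Multiset.card_pair,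
    hlength, mul_div_assoc, div_div]

theorem choose_mul_choose_mul_hurwitzCount_div (α β i j : ℕ) (μ ν : Multiset ℕ) :
    ((α + β).choose α * ((i + j).choose i * (hurwitzCount α i μ * hurwitzCount β j ν)) : ℚ) /
        ((α + β)! * (i + j)!) =
      normalizedHurwitzCount α i μ * normalizedHurwitzCount β j ν := by
  rw [Nat.cast_add_choose, Nat.cast_add_choose, normalizedHurwitzCount, normalizedHurwitzCount]
  field_simp

theorem two_mul_succ_mul_normalizedHurwitzCount_singleton {k : ℕ} (hk : 0 < k) (m : ℕ) :
    2 * (m + 1) * normalizedHurwitzCount k (m + 1) {k} =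
      ∑ α ∈ Finset.Ico 1 k, (α : ℚ) * (k - α : ℕ) *
        ((if α = k - α then 2 else 1) * normalizedHurwitzCount k m {α, k - α} +
          ∑ ij ∈ antidiagonal m,
            normalizedHurwitzCount α ij.1 {α} * normalizedHurwitzCount (k - α) ij.2 {k - α}) := by
  calc 2 * (m + 1) * normalizedHurwitzCount k (m + 1) {k}
      = (2 * hurwitzCount k (m + 1) {k} : ℕ) / (k ! * m !) := by
        rw [normalizedHurwitzCount, Nat.factorial_succ]
        push_cast
        field_simp
    _ = _ := by
        rw [two_mul_hurwitzCount_singleton hk, Nat.cast_sum, Finset.sum_div]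
        refine Finset.sum_congr rfl fun α hα => ?_
        obtain ⟨β, rfl⟩ := Nat.exists_eq_add_of_le (Finset.mem_Ico.1 hα).2.le
        rw [Nat.add_sub_cancel_left]
        push_cast
        rw [mul_div_assoc, add_div, mul_div_assoc, Finset.mul_sum, Finset.sum_div]
        congr 2
        refine Finset.sum_congr rfl fun ij hij => ?_
        obtain rfl := mem_antidiagonal.1 hij
        exact choose_mul_choose_mul_hurwitzCount_div ..

theorem exists_eq_of_normalizedHurwitzCount_ne_zero {k n : ℕ} (hk : 0 < k)
    (h : normalizedHurwitzCount k n {k} ≠ 0) : ∃ g, n + 1 = 2 * g + k := by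
  have : NeZero k := ⟨hk.ne'⟩
  have hcount : hurwitzCount k n {k} ≠ 0 := by
    intro hzero
    simp [normalizedHurwitzCount, hzero] at h
  rw [hurwitzCount_singleton hk] at hcount
  simpa using exists_add_one_eq_of_wordCount_ne_zero hcount

theorem sum_antidiagonal_normalizedHurwitzCount {α β g m : ℕ} (hα : 0 < α) (hβ : 0 < β)
    (hm : m + 2 = 2 * g + (α + β)) :
    ∑ ij ∈ antidiagonal m, normalizedHurwitzCount α ij.1 {α} * normalizedHurwitzCount β ij.2 {β} =
      ∑ gh ∈ antidiagonal g, Hone gh.1 α * Hone gh.2 β := by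
  symm
  refine Finset.sum_of_injOn (fun gh => (2 * gh.1 + α - 1, 2 * gh.2 + β - 1)) ?_ ?_ ?_ ?_
  · rintro ⟨g₁, h₁⟩ - ⟨g₂, h₂⟩ - heq
    simp only [Prod.mk.injEq] at heq ⊢
    omega
  · rintro ⟨g₁, g₂⟩ hg
    simp only [Finset.mem_coe, mem_antidiagonal] at hg ⊢
    omega
  · rintro ⟨i, j⟩ hij hnotMem
    by_contra hne
    obtain ⟨g₁, hg₁⟩ := exists_eq_of_normalizedHurwitzCount_ne_zero hα (left_ne_zero_of_mul hne)
    obtain ⟨g₂, hg₂⟩ := exists_eq_of_normalizedHurwitzCount_ne_zero hβ (right_ne_zero_of_mul hne)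
    simp only [mem_antidiagonal] at hij hg₁ hg₂
    refine hnotMem ⟨(g₁, g₂), ?_, ?_⟩
    · simp only [Finset.mem_coe, mem_antidiagonal]
      omega
    · simp only [Prod.mk.injEq]
      omega
  · simp only [Hone_eq_normalizedHurwitzCount, implies_true]

end Normalization

/-- The cut-and-join equation for a one-part profile `(k)`:
`(2g-1+k) H_g(k) = (1/2) Σ_{α+β=k, α,β≥1} αβ ( H_{g-1}(α,β) + Σ_{g1+g2=g} H_{g1}(α) H_{g2}(β) )`. -/
theorem cut_and_join_one_part (g k : ℕ) (hg : 1 ≤ g) (hk : 1 ≤ k) :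
    (2 * (g : ℚ) - 1 + (k : ℚ)) * Hone g k =
      (1 / 2) * ∑ α ∈ Finset.Ico 1 k, (α : ℚ) * ((k - α : ℕ) : ℚ) *
        (Htwo (g - 1) α (k - α) +
          ∑ g1 ∈ Finset.range (g + 1), Hone g1 α * Hone (g - g1) (k - α)) := by
  obtain ⟨m, hm⟩ : ∃ m, 2 * g + k - 1 = m + 1 := ⟨2 * g + k - 2, by omega⟩
  have hcoeff : 2 * (g : ℚ) - 1 + k = m + 1 := by
    have : 2 * g + k = m + 2 := by omega
    have : (2 * g + k : ℚ) = m + 2 := mod_cast this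
    linarith
  have hsum : 2 * (m + 1) * Hone g k = ∑ α ∈ Finset.Ico 1 k, (α : ℚ) * ((k - α : ℕ) : ℚ) *
      (Htwo (g - 1) α (k - α) +
        ∑ g1 ∈ Finset.range (g + 1), Hone g1 α * Hone (g - g1) (k - α)) := by
    rw [Hone_eq_normalizedHurwitzCount, hm, two_mul_succ_mul_normalizedHurwitzCount_singleton hk]
    refine Finset.sum_congr rfl fun α hα => ?_
    obtain ⟨hα₁, hα₂⟩ := Finset.mem_Ico.1 hα
    obtain ⟨β, rfl⟩ := Nat.exists_eq_add_of_le hα₂.le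
    have hlength : 2 * (g - 1) + (α + β) = m := by omega
    rw [Nat.add_sub_cancel_left, Htwo_eq_normalizedHurwitzCount, hlength,
      sum_antidiagonal_normalizedHurwitzCount (g := g) hα₁ (by omega) (by omega),
      Finset.Nat.sum_antidiagonal_eq_sum_range_succ fun i j => Hone i α * Hone j β]
  rw [hcoeff, ← hsum]
  ring
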